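/- Let u: (0,∞) → ℝ be defined implicitly by ∫_{u(y)}^{∞} ds / √(e^{2s} − 2s − 1) = y. Then u is well-defined (the integral converges for every real lower limit and the map is a strictly decreasing bijection onto (0,∞)), u is smooth, strictly positive, strictly decreasing, and satisfies the ODE −1 − u'' + e^{2u} = 0, with u' = −√(e^{2u} − 2u − 1). -/

import Mathlib

open Real MeasureTheory Set Filter

/-- The integral `F(a) = ∫_{a}^{∞} ds / √(e^{2s} − 2s − 1)`. -/
noncomputable def Fint (a : ℝ) : ℝ :=
  ∫ s in Set.Ioi a, 1 / Real.sqrt (Real.exp (2 * s) - 2 * s - 1)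

/-!
The first integral `u'² = e^{2u} - 2u - 1` of the equation `u'' = e^{2u} - 1` vanishes to second
order at `u = 0`, so its travel time `F(a) = ∫_a^∞ ds / √(e^{2s} - 2s - 1)` diverges
logarithmically as `a → 0⁺`, while the exponential growth makes `F(a)` finite for `a > 0`. Hence
`F` is a decreasing bijection of `(0, ∞)`. Its inverse `u` solves the first-order equation
`u' = 1 / F'(u) = -√(e^{2u} - 2u - 1)`, whose right-hand side is smooth on `(0, ∞)`: bootstrapping
gives the smoothness of `u`, and differentiating once more gives the second-order equation.
-/

open scoped Topology ContDiff

section TailIntegral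

variable {E : Type*} [NormedAddCommGroup E] [NormedSpace ℝ E]

theorem continuousOn_integral_Ioi {f : ℝ → E} {c : ℝ}
    (hf : ∀ a ∈ Ioi c, IntegrableOn f (Ioi a)) :
    ContinuousOn (fun a ↦ ∫ s in Ioi a, f s) (Ioi c) := by
  intro a ha
  obtain ⟨b, hcb, hba⟩ := exists_between (mem_Ioi.1 ha)
  exact ((hf b hcb).continuousOn_Ici_primitive_Ioi.continuousAt
    (Ici_mem_nhds hba)).continuousWithinAt

theorem hasDerivAt_integral_Ioi [CompleteSpace E] {f : ℝ → E} {a b : ℝ}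
    (hf : IntegrableOn f (Ioi b)) (hba : b < a) (ha : ContinuousAt f a) :
    HasDerivAt (fun x ↦ ∫ s in Ioi x, f s) (-f a) a := by
  have hprimitive : HasDerivAt (fun x ↦ ∫ s in b..x, f s) (f a) a :=
    intervalIntegral.integral_hasDerivAt_right
      ((intervalIntegrable_iff_integrableOn_Ioc_of_le hba.le).2
        (hf.mono_set Ioc_subset_Ioi_self))
      ⟨Ioi b, Ioi_mem_nhds hba, hf.aestronglyMeasurable⟩ ha
  refine (hprimitive.const_sub (∫ s in Ioi b, f s)).congr_of_eventuallyEq ?_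
  filter_upwards [Ioi_mem_nhds hba] with x hx
  rw [← intervalIntegral.integral_Ioi_sub_Ioi hf (le_of_lt hx), sub_sub_cancel]

variable {f : ℝ → ℝ} {c : ℝ}

theorem strictAntiOn_integral_Ioi (hf : ∀ a ∈ Ioi c, IntegrableOn f (Ioi a))
    (hpos : ∀ s ∈ Ioi c, 0 < f s) : StrictAntiOn (fun a ↦ ∫ s in Ioi a, f s) (Ioi c) := by
  intro a ha b _ hab
  rw [← sub_pos, intervalIntegral.integral_Ioi_sub_Ioi (hf a ha) hab.le]
  exact intervalIntegral.intervalIntegral_pos_of_pos_on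
    ((intervalIntegrable_iff_integrableOn_Ioc_of_le hab.le).2
      ((hf a ha).mono_set Ioc_subset_Ioi_self))
    (fun s hs ↦ hpos s (ha.trans hs.1)) hab

theorem tendsto_integral_Ioi_nhdsGT_atTop (hf : ∀ a ∈ Ioi c, IntegrableOn f (Ioi a))
    (hnonneg : ∀ s ∈ Ioi c, 0 ≤ f s) (hdiv : ¬IntegrableOn f (Ioi c)) :
    Tendsto (fun a ↦ ∫ s in Ioi a, f s) (𝓝[>] c) atTop := by
  have hanti : AntitoneOn (fun a ↦ ∫ s in Ioi a, f s) (Ioi c) := fun a ha b _ hab ↦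
    setIntegral_mono_set (hf a ha)
      ((ae_restrict_mem measurableSet_Ioi).mono fun s hs ↦ hnonneg s (mem_Ioi.2 (lt_trans ha hs)))
      (Ioi_subset_Ioi hab).eventuallyLE
  have hunbounded : ∀ M, ∃ a ∈ Ioi c, M < ∫ s in Ioi a, f s := by
    by_contra! hbounded
    obtain ⟨M, hM⟩ := hbounded
    obtain ⟨a, -, hac, ha⟩ := exists_seq_strictAnti_tendsto c
    refine hdiv ((aecover_Ioi_of_Ioi ha).integrable_of_integral_bounded_of_nonneg_ae M
      (fun n ↦ (hf _ (hac n)).mono_measure Measure.restrict_le_self)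
      ((ae_restrict_mem measurableSet_Ioi).mono hnonneg) (Eventually.of_forall fun n ↦ ?_))
    rw [Measure.restrict_restrict_of_subset (Ioi_subset_Ioi (hac n).le)]
    exact hM _ (hac n)
  refine tendsto_atTop.2 fun M ↦ ?_
  obtain ⟨a, hca, ha⟩ := hunbounded M
  filter_upwards [Ioc_mem_nhdsGT hca] with b hb
  exact ha.le.trans (hanti hb.1 hca hb.2)

theorem bijOn_integral_Ioi (hf : ∀ a ∈ Ioi c, IntegrableOn f (Ioi a))
    (hpos : ∀ s ∈ Ioi c, 0 < f s) (hdiv : ¬IntegrableOn f (Ioi c)) :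
    BijOn (fun a ↦ ∫ s in Ioi a, f s) (Ioi c) (Ioi 0) := by
  have hanti := strictAntiOn_integral_Ioi hf hpos
  refine ⟨fun a ha ↦ ?_, hanti.injOn, ?_⟩
  · have hnonneg : 0 ≤ ∫ s in Ioi (a + 1), f s :=
      setIntegral_nonneg measurableSet_Ioi fun s hs ↦
        (hpos s (ha.trans ((lt_add_one a).trans hs))).le
    exact hnonneg.trans_lt (hanti ha (ha.trans (lt_add_one a)) (lt_add_one a))
  · exact isPreconnected_Ioi.intermediate_value_Ioi (l₂ := 𝓝[>] c)
      (le_principal_iff.2 (Ioi_mem_atTop c)) inf_le_right (continuousOn_integral_Ioi hf)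
      (tendsto_integral_Ioi_zero tendsto_id)
      (tendsto_integral_Ioi_nhdsGT_atTop hf (fun s hs ↦ (hpos s hs).le) hdiv)

end TailIntegral

section Inverse

theorem strictAntiOn_invFunOn {α β : Type*} [LinearOrder α] [Nonempty α] [Preorder β]
    {f : α → β} {s : Set α} {t : Set β} (hanti : StrictAntiOn f s) (hsurj : SurjOn f s t) :
    StrictAntiOn (Function.invFunOn f s) t := by
  intro x hx y hy hxy
  rw [← hsurj.rightInvOn_invFunOn hx, ← hsurj.rightInvOn_invFunOn hy] at hxy
  exact (hanti.lt_iff_gt (hsurj.mapsTo_invFunOn hx) (hsurj.mapsTo_invFunOn hy)).1 hxy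

theorem continuousAt_invFunOn_of_strictAntiOn {α β : Type*} [LinearOrder α] [TopologicalSpace α]
    [OrderTopology α] [DenselyOrdered α] [Nonempty α] [LinearOrder β] [TopologicalSpace β]
    [OrderTopology β] {f : α → β} {s : Set α} {t : Set β} {y : β} (hanti : StrictAntiOn f s)
    (hbij : BijOn f s t) (ht : t ∈ 𝓝 y) (hs : s ∈ 𝓝 (Function.invFunOn f s y)) :
    ContinuousAt (Function.invFunOn f s) y := by
  have himage : Function.invFunOn f s '' t = s := by
    rw [← hbij.image_eq, hbij.injOn.invFunOn_image Subset.rfl]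
  refine StrictMonoOn.continuousAt_of_image_mem_nhds (β := αᵒᵈ)
    (strictAntiOn_invFunOn hanti hbij.surjOn).dual_right ht ?_
  exact mem_of_superset hs himage.ge

theorem hasDerivAt_invFunOn_of_strictAntiOn {f : ℝ → ℝ} {s t : Set ℝ} {y f' : ℝ}
    (hanti : StrictAntiOn f s) (hbij : BijOn f s t) (ht : t ∈ 𝓝 y)
    (hs : s ∈ 𝓝 (Function.invFunOn f s y)) (hf : HasDerivAt f f' (Function.invFunOn f s y))
    (hf' : f' ≠ 0) : HasDerivAt (Function.invFunOn f s) f'⁻¹ y :=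
  hf.of_local_left_inverse (continuousAt_invFunOn_of_strictAntiOn hanti hbij ht hs) hf'
    (mem_of_superset ht hbij.surjOn.rightInvOn_invFunOn)

end Inverse

section AutonomousODE

variable {𝕜 E : Type*} [NontriviallyNormedField 𝕜] [NormedAddCommGroup E] [NormedSpace 𝕜 E]
  {u : 𝕜 → E} {v : E → E} {s : Set 𝕜} {t : Set E}

theorem contDiffOn_succ_of_hasDerivAt_comp {n : ℕ} (hs : IsOpen s) (hu : MapsTo u s t)
    (hv : ContDiffOn 𝕜 n v t) (hode : ∀ y ∈ s, HasDerivAt u (v (u y)) y) :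
    ContDiffOn 𝕜 (n + 1) u s := by
  have hstep {k : ℕ} (hkn : k ≤ n) (huk : ContDiffOn 𝕜 k u s) : ContDiffOn 𝕜 (k + 1) u s := by
    refine (contDiffOn_succ_iff_deriv_of_isOpen hs).2
      ⟨fun y hy ↦ (hode y hy).differentiableAt.differentiableWithinAt, by simp, ?_⟩
    exact ((hv.of_le (mod_cast hkn)).comp huk hu).congr fun y hy ↦ (hode y hy).deriv
  have hbootstrap : ∀ k : ℕ, k ≤ n → ContDiffOn 𝕜 k u s := by
    intro k hkn
    induction k with
    | zero => exact contDiffOn_zero.2 fun y hy ↦ (hode y hy).continuousAt.continuousWithinAt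
    | succ k ih => exact_mod_cast hstep (Nat.le_of_succ_le hkn) (ih (Nat.le_of_succ_le hkn))
  exact hstep le_rfl (hbootstrap n le_rfl)

theorem contDiffOn_infty_of_hasDerivAt_comp (hs : IsOpen s) (hu : MapsTo u s t)
    (hv : ContDiffOn 𝕜 ∞ v t) (hode : ∀ y ∈ s, HasDerivAt u (v (u y)) y) :
    ContDiffOn 𝕜 ∞ u s :=
  contDiffOn_infty.2 fun n ↦
    (contDiffOn_succ_of_hasDerivAt_comp hs hu (contDiffOn_infty.1 hv n) hode).of_le le_self_add

theorem hasDerivAt_deriv_of_hasDerivAt_neg_sqrt {u g : ℝ → ℝ} {y g' : ℝ}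
    (hode : ∀ᶠ x in 𝓝 y, HasDerivAt u (-√(g (u x))) x) (hg : HasDerivAt g g' (u y))
    (hpos : 0 < g (u y)) : HasDerivAt (deriv u) (g' / 2) y := by
  have hsqrt : HasDerivAt (fun x ↦ -√(g (u x)))
      (-(g' * -√(g (u y)) / (2 * √(g (u y))))) y :=
    ((hg.comp y hode.self_of_nhds).sqrt hpos.ne').neg
  have hslope : -(g' * -√(g (u y)) / (2 * √(g (u y)))) = g' / 2 := by
    have := (sqrt_pos.2 hpos).ne'
    field_simp
  rw [hslope] at hsqrt
  exact hsqrt.congr_of_eventuallyEq (hode.mono fun x hx ↦ hx.deriv)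

end AutonomousODE

section Profile

/-- The function `s ↦ e^{2s} - 2s - 1`, the value of `u'²` where `u = s` along the solution: it is
twice the primitive, vanishing at `0`, of the nonlinearity in `u'' = e^{2u} - 1`. -/
noncomputable def potential (s : ℝ) : ℝ := exp (2 * s) - 2 * s - 1

theorem potential_pos {s : ℝ} (hs : s ≠ 0) : 0 < potential s := by
  have := add_one_lt_exp (mul_ne_zero two_ne_zero hs)
  unfold potential
  linarith

theorem potential_le_sq {s : ℝ} (hs : |s| ≤ 1 / 2) : potential s ≤ (2 * s) ^ 2 := by
  have := (abs_le.1 (abs_exp_sub_one_sub_id_le (x := 2 * s)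
    (by rw [abs_mul, abs_two]; linarith))).2
  unfold potential
  linarith

theorem exp_div_two_sq_le_potential {s : ℝ} (hs : 1 ≤ s) : (exp s / 2) ^ 2 ≤ potential s := by
  have hquad := quadratic_le_exp_of_nonneg (x := 2 * s) (by linarith)
  have hsq : (exp s / 2) ^ 2 = exp (2 * s) / 4 := by
    rw [div_pow, ← exp_nat_mul]
    norm_num
  unfold potential
  nlinarith

theorem contDiff_potential {n : WithTop ℕ∞} : ContDiff ℝ n potential := by
  unfold potential
  fun_prop

theorem hasDerivAt_potential (s : ℝ) : HasDerivAt potential (2 * (exp (2 * s) - 1)) s := by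
  have hlin : HasDerivAt (fun s : ℝ ↦ 2 * s) 2 s := by
    simpa using (hasDerivAt_id s).const_mul (2 : ℝ)
  exact ((hlin.exp.sub hlin).sub_const 1).congr_deriv (by ring)

theorem one_div_sqrt_potential_pos {s : ℝ} (hs : s ≠ 0) : 0 < 1 / √(potential s) :=
  one_div_pos.2 (sqrt_pos.2 (potential_pos hs))

theorem continuousAt_one_div_sqrt_potential {s : ℝ} (hs : s ≠ 0) :
    ContinuousAt (fun s ↦ 1 / √(potential s)) s :=
  continuousAt_const.div (contDiff_potential (n := 0)).continuous.sqrt.continuousAt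
    (sqrt_pos.2 (potential_pos hs)).ne'

theorem integrableOn_one_div_sqrt_potential {a : ℝ} (ha : 0 < a) :
    IntegrableOn (fun s ↦ 1 / √(potential s)) (Ioi a) := by
  refine integrable_of_isBigO_exp_neg one_pos
    (fun s hs ↦ (continuousAt_one_div_sqrt_potential
      (ha.trans_le hs).ne').continuousWithinAt) (.of_bound 2 ?_)
  filter_upwards [eventually_ge_atTop 1] with s hs
  rw [norm_of_nonneg (one_div_sqrt_potential_pos (by positivity)).le,
    norm_of_nonneg (exp_pos _).le]
  calc 1 / √(potential s) ≤ 1 / (exp s / 2) :=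
        one_div_le_one_div_of_le (by positivity) (le_sqrt_of_sq_le (exp_div_two_sq_le_potential hs))
    _ = 2 * exp (-1 * s) := by rw [neg_one_mul, exp_neg, one_div_div, div_eq_mul_inv]

theorem not_integrableOn_one_div_sqrt_potential :
    ¬IntegrableOn (fun s ↦ 1 / √(potential s)) (Ioi 0) := by
  have hsingular : (fun s : ℝ ↦ (s - 0)⁻¹) =O[𝓝[≠] 0] fun s ↦ 1 / √(potential s) := by
    refine .of_bound 2 ?_
    filter_upwards [self_mem_nhdsWithin,
      mem_nhdsWithin_of_mem_nhds (Metric.closedBall_mem_nhds (0 : ℝ) one_half_pos)] with s hs hs'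
    have hsqrt : √(potential s) ≤ 2 * |s| := by
      rw [← abs_two, ← abs_mul]
      exact sqrt_le_iff.2 ⟨abs_nonneg _, by
        simpa only [sq_abs] using potential_le_sq (by simpa using hs')⟩
    rw [sub_zero, norm_inv, norm_eq_abs, norm_of_nonneg (one_div_sqrt_potential_pos hs).le]
    calc |s|⁻¹ = 2 * (1 / (2 * |s|)) := by field_simp
      _ ≤ 2 * (1 / √(potential s)) := by
        gcongr
        exact sqrt_pos.2 (potential_pos hs)
  intro hint
  exact not_intervalIntegrable_of_sub_inv_isBigO_punctured hsingular zero_ne_one left_mem_uIcc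
    ((intervalIntegrable_iff_integrableOn_Ioc_of_le zero_le_one).2
      (hint.mono_set Ioc_subset_Ioi_self))

theorem strictAntiOn_Fint : StrictAntiOn Fint (Ioi 0) :=
  strictAntiOn_integral_Ioi (fun _ ↦ integrableOn_one_div_sqrt_potential)
    fun _ hs ↦ one_div_sqrt_potential_pos hs.ne'

theorem bijOn_Fint : BijOn Fint (Ioi 0) (Ioi 0) :=
  bijOn_integral_Ioi (fun _ ↦ integrableOn_one_div_sqrt_potential)
    (fun _ hs ↦ one_div_sqrt_potential_pos hs.ne') not_integrableOn_one_div_sqrt_potential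

theorem hasDerivAt_Fint {a : ℝ} (ha : 0 < a) : HasDerivAt Fint (-(1 / √(potential a))) a :=
  hasDerivAt_integral_Ioi (integrableOn_one_div_sqrt_potential (half_pos ha)) (half_lt_self ha)
    (continuousAt_one_div_sqrt_potential ha.ne')

/-- The solution `u` of `∫_{u(y)}^∞ ds / √(e^{2s} - 2s - 1) = y` for `y > 0`, as the inverse of
`Fint` on `(0, ∞)`; its values at `y ≤ 0` are arbitrary. -/
noncomputable def profile : ℝ → ℝ := Function.invFunOn Fint (Ioi 0)

theorem profile_pos {y : ℝ} (hy : 0 < y) : 0 < profile y :=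
  bijOn_Fint.surjOn.mapsTo_invFunOn hy

theorem Fint_profile {y : ℝ} (hy : 0 < y) : Fint (profile y) = y :=
  bijOn_Fint.surjOn.rightInvOn_invFunOn hy

theorem strictAntiOn_profile : StrictAntiOn profile (Ioi 0) :=
  strictAntiOn_invFunOn strictAntiOn_Fint bijOn_Fint.surjOn

theorem hasDerivAt_profile {y : ℝ} (hy : 0 < y) :
    HasDerivAt profile (-√(potential (profile y))) y := by
  have hpos := profile_pos hy
  have hinverse : HasDerivAt profile (-(1 / √(potential (profile y))))⁻¹ y :=
    hasDerivAt_invFunOn_of_strictAntiOn strictAntiOn_Fint bijOn_Fint (Ioi_mem_nhds hy)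
      (Ioi_mem_nhds hpos) (hasDerivAt_Fint hpos)
      (neg_ne_zero.2 (one_div_sqrt_potential_pos hpos.ne').ne')
  simpa only [inv_neg, one_div, inv_inv] using hinverse

theorem contDiffOn_profile : ContDiffOn ℝ ∞ profile (Ioi 0) :=
  contDiffOn_infty_of_hasDerivAt_comp isOpen_Ioi (fun _ ↦ profile_pos)
    (contDiff_potential.contDiffOn.sqrt fun _ hs ↦ (potential_pos (ne_of_gt hs)).ne').neg
    fun _ ↦ hasDerivAt_profile

theorem deriv_deriv_profile {y : ℝ} (hy : 0 < y) :
    deriv (deriv profile) y = exp (2 * profile y) - 1 := by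
  have hode : ∀ᶠ x in 𝓝 y, HasDerivAt profile (-√(potential (profile x))) x :=
    mem_of_superset (Ioi_mem_nhds hy) fun _ ↦ hasDerivAt_profile
  rw [(hasDerivAt_deriv_of_hasDerivAt_neg_sqrt hode (hasDerivAt_potential _)
    (potential_pos (profile_pos hy).ne')).deriv, mul_div_cancel_left₀ _ two_ne_zero]

end Profile

/-- the map `a ↦ ∫_a^∞ ds/√(e^{2s}−2s−1)` is well defined (the integrand is
integrable on `(a,∞)` for every lower limit `a > 0`) and is a strictly decreasing bijection
of `(0,∞)` onto `(0,∞)`; hence there is a (smooth, strictly positive, strictly decreasing)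
function `u` on `(0,∞)` with `∫_{u(y)}^∞ ds/√(e^{2s}−2s−1) = y`, satisfying
`−1 − u'' + e^{2u} = 0` and `u' = −√(e^{2u} − 2u − 1)`. -/
theorem stmt_3 :
    (∀ a : ℝ, 0 < a →
        IntegrableOn (fun s => 1 / Real.sqrt (Real.exp (2 * s) - 2 * s - 1)) (Set.Ioi a)) ∧
    StrictAntiOn Fint (Set.Ioi 0) ∧
    Set.BijOn Fint (Set.Ioi 0) (Set.Ioi 0) ∧
    ∃ u : ℝ → ℝ,
      (∀ y, 0 < y → Fint (u y) = y) ∧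
      ContDiffOn ℝ (⊤ : ℕ∞) u (Set.Ioi 0) ∧
      (∀ y, 0 < y → 0 < u y) ∧
      StrictAntiOn u (Set.Ioi 0) ∧
      (∀ y, 0 < y →
        (-1 - deriv (deriv u) y + Real.exp (2 * u y) = 0) ∧
        deriv u y = -Real.sqrt (Real.exp (2 * u y) - 2 * u y - 1)) := by
  refine ⟨fun _ ↦ integrableOn_one_div_sqrt_potential, strictAntiOn_Fint, bijOn_Fint, profile,
    fun _ ↦ Fint_profile, contDiffOn_profile, fun _ ↦ profile_pos, strictAntiOn_profile,
    fun y hy ↦ ⟨?_, (hasDerivAt_profile hy).deriv⟩⟩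
  rw [deriv_deriv_profile hy]
  ring
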